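/- Let μ ∈ (0, 1), ν > 0 and t ∈ ℝ. Then lim_{n→∞} Σ_{k=0}^{∞} ((e^{t/n^{μ}} − 1)·ν·n^{μ})^{k} / Γ(μk + 1) = Σ_{k=0}^{∞} (νt)^{k} / Γ(μk + 1), where the limit is over n ∈ ℕ. That is, the moment generating function of the scaled fractional Poisson process value N_{μ,ν}(n)/n^{μ}, whose mgf is E(exp(s·N_{μ,ν}(n))) = Σ_{k=0}^{∞} ((e^{s} − 1)·ν·n^{μ})^{k}/Γ(μk+1), converges pointwise to the Mittag-Leffler function E_μ(νt) = Σ_{k=0}^{∞} (νt)^{k}/Γ(μk+1). -/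

import Mathlib

open Filter

/-!
By log-convexity of `Γ` and `Γ (x + 1) = x Γ (x)`, the secant slopes of `log Γ` to the right of
`x + 1` are at least `log x`, so `Γ (s + a) / Γ s` grows at least like `s ^ a`. Hence consecutive
coefficients of the series of `E_μ` have ratio tending to `0`, and `E_μ` is continuous on the whole
line. The argument `(exp (t / a) - 1) * ν * a` at which it is evaluated tends to `ν * t` as
`a → ∞`, by differentiating `exp` at `0`.
-/

open Set Topology

lemma rpow_mul_Gamma_add_one_le {x a : ℝ} (hx : 0 < x) (ha : 0 < a) :
    x ^ a * Real.Gamma (x + 1) ≤ Real.Gamma (x + 1 + a) := by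
  have hΓx : 0 < Real.Gamma x := Real.Gamma_pos_of_pos hx
  have hΓx1 : 0 < Real.Gamma (x + 1) := Real.Gamma_pos_of_pos (by positivity)
  have hΓxa : 0 < Real.Gamma (x + 1 + a) := Real.Gamma_pos_of_pos (by positivity)
  have log_step : Real.log (Real.Gamma (x + 1)) = Real.log x + Real.log (Real.Gamma x) := by
    rw [Real.Gamma_add_one hx.ne', Real.log_mul hx.ne' hΓx.ne']
  have slope_le : Real.log x ≤
      (Real.log (Real.Gamma (x + 1 + a)) - Real.log (Real.Gamma (x + 1))) / a := by
    simpa [log_step] using Real.convexOn_log_Gamma.slope_mono_adjacent (mem_Ioi.2 hx)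
      (mem_Ioi.2 (by positivity : 0 < x + 1 + a)) (lt_add_one x) (lt_add_of_pos_right _ ha)
  rw [le_div_iff₀ ha] at slope_le
  rw [← Real.log_le_log_iff (by positivity) hΓxa, Real.log_mul (by positivity) hΓx1.ne',
    Real.log_rpow hx]
  linarith

lemma tendsto_Gamma_add_div_Gamma_atTop {a : ℝ} (ha : 0 < a) :
    Tendsto (fun s : ℝ => Real.Gamma (s + a) / Real.Gamma s) atTop atTop := by
  have growth : Tendsto (fun s : ℝ => (s - 1) ^ a) atTop atTop :=
    (tendsto_rpow_atTop ha).comp (tendsto_atTop_add_const_right _ (-1) tendsto_id)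
  refine tendsto_atTop_mono' _ ?_ growth
  filter_upwards [eventually_gt_atTop 1] with s hs
  rw [le_div_iff₀ (Real.Gamma_pos_of_pos (by linarith))]
  simpa using rpow_mul_Gamma_add_one_le (sub_pos.2 hs) ha

/-- The Mittag-Leffler function `E_μ` on the real line, for `0 < μ < 1` the moment generating
function of the second family of Mittag-Leffler distribution of order `μ`. The series converges
everywhere when `0 < μ`; for other `μ` the `tsum` may take its junk value `0`. -/
noncomputable def mittagLeffler (μ x : ℝ) : ℝ :=
  ∑' k : ℕ, x ^ k / Real.Gamma (μ * (k : ℝ) + 1)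

namespace mittagLeffler

lemma eq_ofScalarsSum (μ : ℝ) :
    mittagLeffler μ =
      FormalMultilinearSeries.ofScalarsSum fun k : ℕ => (Real.Gamma (μ * (k : ℝ) + 1))⁻¹ := by
  ext x
  simp only [mittagLeffler, FormalMultilinearSeries.ofScalars_sum_eq, smul_eq_mul,
    div_eq_inv_mul]

variable {μ : ℝ}

lemma radius_ofScalars_eq_top (E : Type*) [NormedRing E] [NormedAlgebra ℝ E] (hμ : 0 < μ) :
    (FormalMultilinearSeries.ofScalars E
      fun k : ℕ => (Real.Gamma (μ * (k : ℝ) + 1))⁻¹).radius = ⊤ := by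
  have Gamma_pos (k : ℕ) : 0 < Real.Gamma (μ * (k : ℝ) + 1) :=
    Real.Gamma_pos_of_pos (by positivity)
  have args_tendsto : Tendsto (fun k : ℕ => μ * (k : ℝ) + 1) atTop atTop :=
    tendsto_atTop_add_const_right _ _ (tendsto_natCast_atTop_atTop.const_mul_atTop hμ)
  refine FormalMultilinearSeries.ofScalars_radius_eq_top_of_tendsto _ _
    (.of_forall fun k => (inv_pos.2 (Gamma_pos k)).ne') ?_
  refine ((tendsto_Gamma_add_div_Gamma_atTop hμ).comp args_tendsto).inv_tendsto_atTop.congr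
    fun k => ?_
  have arg_succ : μ * (k.succ : ℝ) + 1 = μ * (k : ℝ) + 1 + μ := by push_cast; ring
  rw [Real.norm_of_nonneg (inv_pos.2 (Gamma_pos _)).le,
    Real.norm_of_nonneg (inv_pos.2 (Gamma_pos _)).le, inv_div_inv, arg_succ, Pi.inv_apply,
    Function.comp_apply, inv_div]

protected lemma continuous (hμ : 0 < μ) : Continuous (mittagLeffler μ) := by
  have cont := (FormalMultilinearSeries.ofScalars ℝ
    fun k : ℕ => (Real.Gamma (μ * (k : ℝ) + 1))⁻¹).continuousOn
  rw [radius_ofScalars_eq_top ℝ hμ, Metric.eball_top, continuousOn_univ] at cont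
  rw [eq_ofScalarsSum]
  exact cont

end mittagLeffler

lemma tendsto_exp_div_sub_one_mul_atTop (t : ℝ) :
    Tendsto (fun a : ℝ => (Real.exp (t / a) - 1) * a) atTop (𝓝 t) := by
  have deriv_zero : HasDerivAt (fun x : ℝ => Real.exp (t * x)) t 0 := by
    simpa using ((hasDerivAt_id (0 : ℝ)).const_mul t).exp
  refine (deriv_zero.tendsto_slope_zero_right.comp tendsto_inv_atTop_nhdsGT_zero).congr fun a => ?_
  simp [div_eq_mul_inv, mul_comm]

theorem stmt13_general {ι : Type*} {l : Filter ι} {a : ι → ℝ} {μ : ℝ} (ν t : ℝ) (hμ : 0 < μ)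
    (ha : Tendsto a l atTop) :
    Tendsto (fun i => mittagLeffler μ ((Real.exp (t / a i) - 1) * ν * a i)) l
      (𝓝 (mittagLeffler μ (ν * t))) := by
  refine ((mittagLeffler.continuous hμ).tendsto _).comp ?_
  refine (((tendsto_exp_div_sub_one_mul_atTop t).comp ha).const_mul ν).congr fun i => ?_
  simp only [Function.comp_apply]
  ring

/-- **Theorem 3.3 (fractional Poisson part).** For `μ ∈ (0,1)`, `ν > 0` and `t ∈ ℝ`,
the moment generating function of the scaled fractional Poisson process value
`N_{μ,ν}(n)/n^μ`, namely `Σ_{k=0}^∞ ((e^{t/n^μ} − 1)·ν·n^μ)^k / Γ(μk+1)`,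
converges as `n → ∞` to the Mittag-Leffler function value
`E_μ(νt) = Σ_{k=0}^∞ (νt)^k / Γ(μk+1)`. -/
theorem stmt13 (μ ν t : ℝ) (hμ0 : 0 < μ) (hμ1 : μ < 1) (hν : 0 < ν) :
    Tendsto
      (fun n : ℕ =>
        ∑' k : ℕ,
          ((Real.exp (t / (n : ℝ) ^ μ) - 1) * ν * (n : ℝ) ^ μ) ^ k /
            Real.Gamma (μ * (k : ℝ) + 1))
      atTop
      (nhds (∑' k : ℕ, (ν * t) ^ k / Real.Gamma (μ * (k : ℝ) + 1))) := by
  exact stmt13_general ν t hμ0 ((tendsto_rpow_atTop hμ0).comp tendsto_natCast_atTop_atTop)
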